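/- arXiv:1806.03995 — 3 statements merged into one kernel-verified Lean document; each statement's English description precedes it below -/
import Mathlib

section
/- For all positive integers k₁ and k₂, one has p_{q_{k₁}} · p_{q_{k₂}} ≤ q_{k₁+k₂}. -/
/-- `nthPrime m` is the `m`-th prime number in ascending order (1-indexed):
`nthPrime 1 = 2`, `nthPrime 2 = 3`, `nthPrime 3 = 5`, `nthPrime 4 = 7`, ... -/
noncomputable def nthPrime (m : ℕ) : ℕ := Nat.nth Nat.Prime (m - 1)

/-- The sequence `(q_k)_{k ≥ 1}` with `q 1 = 1` and `q k = 2 * p_{q (k-1)}` for `k > 1`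
(the value `q 0 = 1` is junk). -/
noncomputable def q : ℕ → ℕ
  | 0 => 1
  | 1 => 1
  | (k+2) => 2 * nthPrime (q (k+1))

theorem lg_ge {t : ℝ} (p n : ℕ) (hn : 0 < n) (_ht : 0 < t) (h : (2:ℝ) ^ p ≤ t ^ n) :
    (p : ℝ) / n ≤ Real.logb 2 t := by
  have h1 : Real.logb 2 ((2:ℝ)^p) ≤ Real.logb 2 (t^n) :=
    Real.logb_le_logb_of_le (by norm_num) (by positivity) h
  rw [Real.logb_pow, Real.logb_pow, Real.logb_self_eq_one (by norm_num)] at h1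
  rw [div_le_iff₀ (by positivity)]
  linarith

theorem lg_le {t : ℝ} (p n : ℕ) (hn : 0 < n) (ht : 0 < t) (h : t ^ n ≤ (2:ℝ) ^ p) :
    Real.logb 2 t ≤ (p : ℝ) / n := by
  have h1 : Real.logb 2 (t^n) ≤ Real.logb 2 ((2:ℝ)^p) :=
    Real.logb_le_logb_of_le (by norm_num) (by positivity) h
  rw [Real.logb_pow, Real.logb_pow, Real.logb_self_eq_one (by norm_num)] at h1
  rw [le_div_iff₀ (by positivity)]
  linarith

theorem lg_mono {s t : ℝ} (hs : 0 < s) (h : s ≤ t) : Real.logb 2 s ≤ Real.logb 2 t :=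
  Real.logb_le_logb_of_le (by norm_num) hs h

section

structure QSeq (P R : ℕ → ℝ) : Prop where
  pos : ∀ k, 1 ≤ k → 0 < P k
  rpos : ∀ k, 1 ≤ k → 2 ≤ R k
  step : ∀ k, 1 ≤ k → P (k+1) = R k * P k
  up : ∀ k, 1 ≤ k → Real.logb 2 (P (k+1)) - 7/2 ≤ R k
  lo : ∀ k, 1 ≤ k → R k ≤ 2 * Real.logb 2 (P (k+1)) + 1 / P k
  p1 : P 1 = 2
  p2 : P 2 = 7
  p3 : P 3 = 43
  p4 : P 4 = 443
  p5 : P 5 = 6883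

variable {P R : ℕ → ℝ}

theorem QSeq.mono (h : QSeq P R) {a b : ℕ} (ha : 1 ≤ a) (hab : a ≤ b) : P a ≤ P b := by
  induction b, hab using Nat.le_induction with
  | base => exact le_rfl
  | succ b hb ih =>
    have h1 := h.rpos b (by omega)
    have h2 := h.pos b (by omega)
    rw [h.step b (by omega)]
    nlinarith

theorem QSeq.lgstep (h : QSeq P R) {k : ℕ} (hk : 1 ≤ k) :
    Real.logb 2 (P (k+1)) = Real.logb 2 (R k) + Real.logb 2 (P k) := by
  have h1 := h.rpos k hk
  have h2 := h.pos k hk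
  rw [h.step k hk, Real.logb_mul (by positivity) (by positivity)]

/-- From a bound on `lg P k` and a weak bound on `R k`, get a better bound. -/
theorem QSeq.boost (h : QSeq P R) {k : ℕ} (hk : 1 ≤ k) {l r s : ℝ} (hl : l ≤ Real.logb 2 (P k))
    (hr : r ≤ R k) (hr0 : 0 < r) (p n : ℕ) (hn : 0 < n) (hp : (2:ℝ) ^ p ≤ r ^ n)
    (hs : s ≤ (p : ℝ) / n) : l + s - 7/2 ≤ R k ∧ l + s ≤ Real.logb 2 (P (k+1)) := by
  have h1 := lg_ge p n hn hr0 hp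
  have h2 := lg_mono hr0 hr
  have h3 := h.up k hk
  rw [h.lgstep hk] at h3 ⊢
  constructor <;> linarith

theorem QSeq.lg5 (h : QSeq P R) {k : ℕ} (hk : 5 ≤ k) : (12.73:ℝ) ≤ Real.logb 2 (P k) := by
  have h1 := h.mono (by norm_num) hk
  rw [h.p5] at h1
  have h2 := lg_mono (by norm_num) h1
  have h3 := lg_ge (t := 6883) 191 15 (by norm_num) (by norm_num) (by norm_num)
  norm_num at h3 ⊢
  linarith

theorem QSeq.R5 (h : QSeq P R) {k : ℕ} (hk : 5 ≤ k) : (9.23:ℝ) ≤ R k := by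
  have h1 := h.up k (by omega)
  have h2 := h.lg5 (k := k+1) (by omega)
  linarith

theorem QSeq.R3 (h : QSeq P R) {k : ℕ} (hk : 3 ≤ k) : (5:ℝ) ≤ R k := by
  have h0 := h.up k (by omega)
  have h1 := h.mono (by norm_num) (show 4 ≤ k + 1 by omega)
  rw [h.p4] at h1
  have h2 := lg_mono (by norm_num) h1
  have h3 := lg_ge (t := 443) 85 10 (by norm_num) (by norm_num) (by norm_num)
  norm_num at h3
  linarith

theorem QSeq.R4 (h : QSeq P R) {k : ℕ} (hk : 4 ≤ k) : (9.23:ℝ) ≤ R k := by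
  have h1 := h.up k (by omega)
  have h2 := h.lg5 (k := k+1) (by omega)
  linarith

theorem QSeq.row5 (h : QSeq P R) {b : ℕ} (hb : 5 ≤ b) : 12 * P 5 * P b ≤ P (b + 4) := by
  have e0 := h.lg5 hb
  have a0 := h.R5 hb
  obtain ⟨a1, -⟩ := h.boost (by omega) e0 a0 (by norm_num) 32 10 (by norm_num) (by norm_num)
    (s := 3.2) (by norm_num)
  obtain ⟨a2, e2⟩ := h.boost (by omega) e0 a1 (by norm_num) 36 10 (by norm_num) (by norm_num)
    (s := 3.6) (by norm_num)
  have b0 := h.R5 (k := b+1) (by omega)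
  obtain ⟨b1, -⟩ := h.boost (by omega) e2 b0 (by norm_num) 32 10 (by norm_num) (by norm_num)
    (s := 3.2) (by norm_num)
  obtain ⟨b2, e3⟩ := h.boost (by omega) e2 b1 (by norm_num) 4 1 (by norm_num) (by norm_num)
    (s := 4) (by norm_num)
  have c0 := h.R5 (k := b+2) (by omega)
  obtain ⟨c1, -⟩ := h.boost (by omega) e3 c0 (by norm_num) 32 10 (by norm_num) (by norm_num)
    (s := 3.2) (by norm_num)
  obtain ⟨c2, e4⟩ := h.boost (by omega) e3 c1 (by norm_num) 43 10 (by norm_num) (by norm_num)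
    (s := 4.3) (by norm_num)
  have d0 := h.R5 (k := b+3) (by omega)
  obtain ⟨d1, -⟩ := h.boost (by omega) e4 d0 (by norm_num) 32 10 (by norm_num) (by norm_num)
    (s := 3.2) (by norm_num)
  obtain ⟨d2, -⟩ := h.boost (by omega) e4 d1 (by norm_num) 45 10 (by norm_num) (by norm_num)
    (s := 4.5) (by norm_num)
  have hp := h.pos b (by omega)
  rw [h.step (b+3) (by omega), h.step (b+2) (by omega), h.step (b+1) (by omega),
    h.step b (by omega), h.p5]
  have q1 : (16.8:ℝ) * 12.8 ≤ R (b+1) * R b := by gcongr <;> linarith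
  have q2 : (21:ℝ) * (16.8 * 12.8) ≤ R (b+2) * (R (b+1) * R b) := by gcongr; linarith
  have q3 : (25:ℝ) * (21 * (16.8 * 12.8)) ≤ R (b+3) * (R (b+2) * (R (b+1) * R b)) := by
    gcongr; linarith
  have q4 : (12 * 6883:ℝ) * P b ≤ R (b+3) * (R (b+2) * (R (b+1) * R b)) * P b :=
    mul_le_mul_of_nonneg_right (by linarith) hp.le
  linarith

theorem QSeq.bump (h : QSeq P R) {a b : ℕ} (ha : 1 ≤ a) (hb : 1 ≤ b) {K : ℝ}
    (h1 : K * P a * P b ≤ P (a + b - 1)) (hR : R a ≤ R (a + b - 1)) :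
    K * P (a + 1) * P b ≤ P (a + 1 + b - 1) := by
  have e : a + 1 + b - 1 = (a + b - 1) + 1 := by omega
  have hp := h.pos (a + b - 1) (by omega)
  have h2 := h.rpos a ha
  rw [e, h.step a ha, h.step (a + b - 1) (by omega)]
  calc _ = R a * (K * P a * P b) := by ring
    _ ≤ R a * P (a + b - 1) := by gcongr
    _ ≤ _ := by gcongr

theorem lg12 : (3.58 : ℝ) ≤ Real.logb 2 12 := by
  have h3 := lg_ge (t := 12) 179 50 (by norm_num) (by norm_num) (by norm_num)
  norm_num at h3 ⊢
  linarith

theorem QSeq.lgT (h : QSeq P R) {a b : ℕ} (ha : 1 ≤ a) (hb : 1 ≤ b)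
    (h1 : 12 * P a * P b ≤ P (a + b - 1)) :
    3.58 + Real.logb 2 (P a) + Real.logb 2 (P b) ≤ Real.logb 2 (P (a + b - 1)) := by
  have pa := h.pos a ha
  have pb := h.pos b hb
  have := lg_mono (by positivity) h1
  rw [Real.logb_mul (by positivity) (by positivity),
    Real.logb_mul (by positivity) (by positivity)] at this
  linarith [lg12]

theorem QSeq.invP (h : QSeq P R) {a : ℕ} (ha : 5 ≤ a) : 1 / P a ≤ 0.08 := by
  have h1 := h.mono (by norm_num) ha
  rw [h.p5] at h1
  rw [div_le_iff₀ (by linarith)]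
  linarith

theorem QSeq.diag (h : QSeq P R) {a : ℕ} (ha : 5 ≤ a)
    (h1 : 12 * P a * P (a + 1) ≤ P (a + (a + 1) - 1)) : R a ≤ R (a + (a + 1) - 1) := by
  have e : a + (a + 1) - 1 = 2 * a := by omega
  have h2 := h.lgT (by omega) (by omega) h1
  rw [e] at *
  by_contra! hc
  have ra := h.rpos a (by omega)
  have r2 := h.rpos (2 * a) (by omega)
  have u := h.up (2 * a) (by omega)
  have l := h.lo a (by omega)
  have i := h.invP ha
  rw [h.lgstep (by omega)] at u
  have s := h.lgstep (k := a) (by omega)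
  have key : R a + (Real.logb 2 (R (2 * a)) - Real.logb 2 (R a)) ≤ R (2 * a) := by linarith
  have k2 : Real.logb 2 (R a) - Real.logb 2 (R (2*a)) = Real.log (R a / R (2*a)) / Real.log 2 := by
    rw [Real.log_div (by positivity) (by positivity), Real.logb, Real.logb, sub_div]
  have k3 : Real.log (R a / R (2*a)) ≤ R a / R (2*a) - 1 :=
    Real.log_le_sub_one_of_pos (by positivity)
  have k4 : R a / R (2*a) - 1 ≤ (R a - R (2*a)) / 2 := by
    rw [div_sub_one (by positivity)]
    gcongr
  have l2 := Real.log_two_gt_d9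
  have k5 : R a - R (2*a) ≤ Real.log (R a / R (2*a)) / Real.log 2 := by linarith
  rw [le_div_iff₀ (by positivity)] at k5
  nlinarith

theorem QSeq.T (h : QSeq P R) (a : ℕ) (ha : 5 ≤ a) :
    ∀ b, a ≤ b → 12 * P a * P b ≤ P (a + b - 1) := by
  induction a, ha using Nat.le_induction with
  | base =>
    intro b hb
    have := h.row5 hb
    rwa [show 5 + b - 1 = b + 4 by omega]
  | succ a ha ih =>
    intro b hb
    induction b, hb using Nat.le_induction with
    | base => exact h.bump (by omega) (by omega) (ih _ (by omega)) (h.diag ha (ih _ (by omega)))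
    | succ b hb ihb =>
      refine h.bump (by omega) (by omega) (ih _ (by omega)) ?_
      have h2 := h.lgT (by omega) (by omega) ihb
      have e : a + 1 + b - 1 = a + b := by omega
      have e' : a + (b + 1) - 1 = a + b := by omega
      rw [e] at h2
      rw [e']
      have l := h.lo a (by omega)
      have i := h.invP ha
      have u := h.up (a + b) (by omega)
      have m1 := lg_mono (h.pos _ (by omega)) (h.mono (show 1 ≤ a + 1 by omega) hb)
      have m2 := lg_mono (h.pos _ (by omega)) (h.mono (show 1 ≤ a + b by omega)
        (show a + b ≤ a + b + 1 by omega))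
      linarith

theorem QSeq.main (h : QSeq P R) (a b : ℕ) (ha : 1 ≤ a) (hab : a ≤ b) :
    P a * P b ≤ 2 * P (a + b - 1) := by
  have pb := h.pos b (by omega)
  rcases Nat.lt_or_ge a 5 with h5 | h5
  · interval_cases a
    · rw [h.p1, show 1 + b - 1 = b by omega]
    · rw [show 2 + b - 1 = b + 1 by omega]
      rcases Nat.lt_or_ge b 3 with h3 | h3
      · interval_cases b
        rw [h.p2, h.p3]; norm_num
      · have := h.R3 h3
        rw [h.step b (by omega), h.p2]
        nlinarith
    · rw [show 3 + b - 1 = b + 1 + 1 by omega]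
      have r1 := h.R3 hab
      have r2 := h.R3 (show 3 ≤ b + 1 by omega)
      rw [h.step (b+1) (by omega), h.step b (by omega), h.p3]
      have q1 : (5:ℝ) * 5 ≤ R (b+1) * R b := by gcongr
      nlinarith
    · rw [show 4 + b - 1 = b + 1 + 1 + 1 by omega]
      have r1 := h.R4 hab
      have r2 := h.R4 (show 4 ≤ b + 1 by omega)
      have r3 := h.R4 (show 4 ≤ b + 1 + 1 by omega)
      rw [h.step (b+1+1) (by omega), h.step (b+1) (by omega), h.step b (by omega), h.p4]
      have q1 : (9:ℝ) * 9 ≤ R (b+1) * R b := by gcongr <;> linarith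
      have q2 : (9:ℝ) * (9 * 9) ≤ R (b+1+1) * (R (b+1) * R b) := by gcongr; linarith
      nlinarith
  · have h1 := h.T a h5 b hab
    have h2 := h.pos (a + b - 1) (by omega)
    have h3 := h.pos a ha
    have : 0 < P a * P b := by positivity
    nlinarith
end
open Nat in
theorem half_prod (h x : ℕ) (hx : x = 2 * h ∨ x + 1 = 2 * h) (hh : 2 ≤ h) :
    h ^ (primeCounting x - primeCounting h) ≤ 4 ^ (x - h) := by
  have hle : x - h ≤ h := by omega
  have e : h + (x - h) = x := by omega
  have h1 := primorial_add_le hle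
  rw [primorial_add] at h1
  have h2 := Nat.le_of_mul_le_mul_left h1 (primorial_pos h)
  rw [e] at h2
  have h3 : Nat.choose x h ≤ 4 ^ (x - h) := by
    rcases hx with rfl | hx
    · rw [show 2 * h - h = h by omega, ← Nat.centralBinom_eq_two_mul_choose]
      exact Nat.centralBinom_le_four_pow h
    · obtain ⟨m, rfl⟩ : ∃ m, h = m + 1 := ⟨h - 1, by omega⟩
      obtain rfl : x = 2 * m + 1 := by omega
      rw [show 2 * m + 1 - (m + 1) = m by omega, Nat.choose_symm_half]
      exact Nat.choose_middle_le_pow m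
  refine le_trans ?_ (h2.trans h3)
  have hc : (Finset.filter Nat.Prime (Finset.Ico (h + 1) (x + 1))).card
      = primeCounting x - primeCounting h := by
    have : Finset.filter Nat.Prime (Finset.Ico (h + 1) (x + 1)) =
        primesLE x \ primesLE h := by
      ext p
      simp only [Finset.mem_filter, Finset.mem_Ico, Finset.mem_sdiff, mem_primesLE]
      grind
    rw [this, Finset.card_sdiff_of_subset (primesLE_mono (by omega)),
      primesLE_card_eq_primeCounting, primesLE_card_eq_primeCounting]
  rw [← hc]
  apply Finset.pow_card_le_prod
  intro p hp
  simp only [Finset.mem_filter, Finset.mem_Ico] at hp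
  omega

theorem pi_half (x : ℕ) (hx : 1 ≤ x) : Nat.primeCounting x ≤ (x + 1) / 2 := by
  induction x using Nat.strong_induction_on with
  | _ x ih =>
    rcases Nat.lt_or_ge x 5 with h | h
    · interval_cases x <;> decide
    · have := ih (x - 2) (by omega) (by omega)
      obtain ⟨y, rfl⟩ : ∃ y, x = y + 2 := ⟨x - 2, by omega⟩
      simp only [Nat.add_sub_cancel] at this
      have e : Nat.primeCounting (y + 2) = Nat.primeCounting y + (if Nat.Prime (y+1) then 1 else 0)
          + (if Nat.Prime (y + 2) then 1 else 0) := by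
        simp only [Nat.primeCounting, Nat.primeCounting', Nat.count_succ]
      have : ¬ (Nat.Prime (y+1) ∧ Nat.Prime (y+2)) := by
        rintro ⟨h1, h2⟩
        have := h1.eq_two_or_odd
        have := h2.eq_two_or_odd
        omega
      rw [e]
      split_ifs <;> first | omega | (exfalso; tauto)

theorem pi_up (x : ℕ) (hx : 1 ≤ x) :
    (Nat.primeCounting x : ℝ) * (Real.logb 2 x - 7/2) ≤ 2 * x := by
  induction x using Nat.strong_induction_on with
  | _ x ih =>
    have hxr : (1:ℝ) ≤ x := by exact_mod_cast hx
    rcases Nat.lt_or_ge x 161 with h | h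
    · have h1 : (Nat.primeCounting x : ℝ) ≤ (x + 1) / 2 := by
        have := pi_half x hx
        rw [le_div_iff₀ (by norm_num)]
        have : Nat.primeCounting x * 2 ≤ x + 1 := by omega
        exact_mod_cast this
      have h0 : (0:ℝ) ≤ Nat.primeCounting x := by positivity
      have hb : Real.logb 2 x ≤ 22/3 := by
        have h3 : (x:ℝ) ≤ 160 := by exact_mod_cast (by omega : x ≤ 160)
        have h4 := lg_mono (by linarith) h3
        have h5 := lg_le (t := 160) 220 30 (by norm_num) (by norm_num) (by norm_num)
        norm_num at h5
        linarith
      rcases Nat.lt_or_ge x 33 with h' | h'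
      · have hb : Real.logb 2 x ≤ 5 := by
          have h3 : (x:ℝ) ≤ 32 := by exact_mod_cast (by omega : x ≤ 32)
          have h4 := lg_mono (by linarith) h3
          have h5 := lg_le (t := 32) 5 1 (by norm_num) (by norm_num) (by norm_num)
          norm_num at h5
          linarith
        nlinarith
      · have : (33:ℝ) ≤ x := by exact_mod_cast h'
        nlinarith
    · obtain ⟨m, hm⟩ : ∃ m, m = (x + 1) / 2 := ⟨_, rfl⟩
      have hm' : x = 2 * m ∨ x + 1 = 2 * m := by omega
      have h81 : 81 ≤ m := by omega
      have i := ih m (by omega) (by omega)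
      have hp := half_prod m x hm' (by omega)
      have hpi : Nat.primeCounting m ≤ Nat.primeCounting x :=
        Nat.monotone_primeCounting (by omega)
      obtain ⟨B, hB⟩ := Nat.exists_eq_add_of_le hpi
      rw [hB, Nat.add_sub_cancel_left] at hp
      rw [hB]
      set A := Nat.primeCounting m
      have hmr : (81:ℝ) ≤ m := by exact_mod_cast h81
      set u := Real.logb 2 (m:ℝ) with hu
      have hu1 : (63/10 : ℝ) ≤ u := by
        have h4 := lg_mono (by norm_num) hmr
        have h5 := lg_ge (t := 81) 63 10 (by norm_num) (by norm_num) (by norm_num)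
        norm_num at h5
        linarith
      have hL : Real.logb 2 x ≤ u + 1 := by
        have h3 : (x:ℝ) ≤ 2 * m := by exact_mod_cast (by omega : x ≤ 2 * m)
        have h4 := lg_mono (by linarith) h3
        rw [Real.logb_mul (by norm_num) (by positivity), Real.logb_self_eq_one (by norm_num)] at h4
        linarith
      have hBu : (B:ℝ) * u ≤ 2 * ((x:ℝ) - m) := by
        have h3 : ((m:ℝ)) ^ B ≤ 2 ^ (2 * (x - m)) := by
          rw [pow_mul]; norm_num
          exact_mod_cast hp
        have h4 := lg_mono (by positivity) h3
        rw [Real.logb_pow, Real.logb_pow, Real.logb_self_eq_one (by norm_num)] at h4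
        push_cast [Nat.cast_sub (by omega : m ≤ x)] at h4
        linarith
      have hA0 : (0:ℝ) ≤ A := by positivity
      have hB0 : (0:ℝ) ≤ B := by positivity
      have hxm : (m:ℝ) - 1 ≤ x - m := by
        have : 2 * m ≤ x + 1 := by omega
        have : (2:ℝ) * m ≤ x + 1 := by exact_mod_cast this
        linarith
      push_cast
      have i' : (A:ℝ) ≤ 2 * m / (u - 7/2) := by
        rw [le_div_iff₀ (by linarith)]; exact i
      have j' : (B:ℝ) ≥ 0 := hB0
      have B' : (B:ℝ) ≤ 2 * (x - m) / u := by
        rw [le_div_iff₀ (by linarith)]; exact hBu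
      calc ((A:ℝ) + B) * (Real.logb 2 x - 7/2) ≤ (A + B) * (u + 1 - 7/2) := by gcongr
        _ ≤ (2 * m / (u - 7/2) + 2 * (x - m) / u) * (u + 1 - 7/2) := by
          gcongr; linarith
        _ ≤ 2 * x := by
          have hu0 : 0 < u := by linarith
          have hu2 : 0 < u - 7/2 := by linarith
          have : 2 * (x:ℝ) - (2 * m / (u - 7/2) + 2 * (x - m) / u) * (u + 1 - 7/2)
            = 2 * ((x - m) * (5/2) * (u - 7/2) - m * u) / (u * (u - 7/2)) := by
            have : u * 2 - 7 ≠ 0 := by intro h; linarith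
            have h3 : u - 7/2 ≠ 0 := hu2.ne'
            generalize hv : u - 7/2 = v at h3 ⊢
            have : u = v + 7/2 := by linarith
            field_simp
            rw [this]; ring
          have h9 : 0 ≤ 2 * (((x:ℝ) - m) * (5/2) * (u - 7/2) - m * u) / (u * (u - 7/2)) := by
            apply div_nonneg _ (by positivity)
            have : ((m:ℝ) - 1) * (5/2 * (u - 7/2)) ≤ (x - m) * (5/2 * (u - 7/2)) := by gcongr
            nlinarith
          linarith

/-- Product of the primes below `83`. -/
def primM : ℕ := 3217644767340672907899084554130

/-- Counts the `n` in `[a, a + 2 ^ d)` coprime to `primM`. -/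
def cpCount : ℕ → ℕ → ℕ
  | 0, a => (Nat.beq (Nat.gcd a primM) 1).toNat
  | d + 1, a => cpCount d a + cpCount d (a + 2 ^ d)

theorem small_dvd : ∀ p < 83, p.Prime → p ∣ primM := by
  intro p hp h
  interval_cases p <;> first | (norm_num [primM]; done) | (norm_num at h; done)

theorem primM_dvd (p : ℕ) (hp : p.Prime) (h : p ∣ primM) : p < 83 := by
  have e : primM = 2*3*5*7*11*13*17*19*23*29*31*37*41*43*47*53*59*61*67*71*73*79 := by
    norm_num [primM]
  rw [e] at h
  simp only [hp.dvd_mul] at h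
  by_contra! hc
  have key : ∀ m, 0 < m → m < 83 → ¬ p ∣ m := fun m h0 hm hd =>
    absurd (Nat.le_of_dvd h0 hd) (by omega)
  simp [key] at h

theorem prime_iff_cp {n : ℕ} (h1 : 83 ≤ n) (h2 : n < 6889) :
    n.Prime ↔ Nat.gcd n primM = 1 := by
  constructor
  · intro hp
    rw [← Nat.coprime_iff_gcd_eq_one, hp.coprime_iff_not_dvd]
    intro hd
    have := primM_dvd n hp hd
    omega
  · intro hg
    by_contra hn
    have h3 := Nat.minFac_sq_le_self (by omega : 0 < n) hn
    have h4 : n.minFac < 83 := by nlinarith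
    have hmp := Nat.minFac_prime (by omega : n ≠ 1)
    have h5 := Nat.dvd_gcd (Nat.minFac_dvd n) (small_dvd _ h4 hmp)
    rw [hg] at h5
    exact hmp.one_lt.ne' (Nat.dvd_one.mp h5)

theorem count_cp (d a : ℕ) (h1 : 83 ≤ a) (h2 : a + 2 ^ d ≤ 6889) :
    Nat.count Nat.Prime (a + 2 ^ d) = Nat.count Nat.Prime a + cpCount d a := by
  induction d generalizing a with
  | zero =>
    simp only [pow_zero, Nat.count_succ, cpCount]
    have := prime_iff_cp h1 (by simp at h2; omega)
    congr 1
    by_cases hp : a.Prime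
    · rw [if_pos hp, this.mp hp]; rfl
    · rw [if_neg hp]
      have : Nat.beq (a.gcd primM) 1 = false := by
        rw [Bool.eq_false_iff]
        intro h
        exact hp (this.mpr (Nat.eq_of_beq_eq_true h))
      rw [this]; rfl
  | succ d ih =>
    rw [pow_succ] at h2 ⊢
    have p := Nat.pos_of_ne_zero (pow_ne_zero d (two_ne_zero (α := ℕ)))
    rw [show a + 2 ^ d * 2 = (a + 2 ^ d) + 2 ^ d by ring, ih _ (by omega) (by omega),
      ih _ h1 (by omega), cpCount, add_assoc]

theorem count83 : Nat.count Nat.Prime 83 = 22 := by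
  norm_num [Nat.count_succ]

theorem count443 : Nat.count Nat.Prime 443 = 85 := by
  have h1 := count_cp 8 83 (by norm_num) (by norm_num)
  have h2 := count_cp 6 339 (by norm_num) (by norm_num)
  have h3 := count_cp 5 403 (by norm_num) (by norm_num)
  have h4 := count_cp 3 435 (by norm_num) (by norm_num)
  have e : cpCount 8 83 + cpCount 6 339 + cpCount 5 403 + cpCount 3 435 = 63 := by
    decide +kernel
  rw [count83] at h1
  norm_num at h1 h2 h3 h4
  omega

theorem count6883 : Nat.count Nat.Prime 6883 = 885 := by
  have h1 := count_cp 12 83 (by norm_num) (by norm_num)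
  have h2 := count_cp 11 4179 (by norm_num) (by norm_num)
  have h3 := count_cp 9 6227 (by norm_num) (by norm_num)
  have h4 := count_cp 7 6739 (by norm_num) (by norm_num)
  have h5 := count_cp 4 6867 (by norm_num) (by norm_num)
  have e : cpCount 12 83 + cpCount 11 4179 + cpCount 9 6227 + cpCount 7 6739
      + cpCount 4 6867 = 863 := by
    decide +kernel
  rw [count83] at h1
  norm_num at h1 h2 h3 h4 h5
  omega

theorem nthPrime_of_count {m n : ℕ} (_hm : 1 ≤ m) (hn : n.Prime)
    (h : Nat.count Nat.Prime n = m - 1) : nthPrime m = n := by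
  rw [nthPrime, ← h, Nat.nth_count hn]

theorem q_succ {k : ℕ} (hk : 1 ≤ k) : q (k + 1) = 2 * nthPrime (q k) := by
  obtain ⟨j, rfl⟩ : ∃ j, k = j + 1 := ⟨k - 1, by omega⟩
  rfl

theorem np1 : nthPrime (q 1) = 2 := nthPrime_of_count le_rfl (by norm_num) (by decide)
theorem np2 : nthPrime (q 2) = 7 := by
  rw [q_succ le_rfl, np1]
  exact nthPrime_of_count (by norm_num) (by norm_num) (by decide)
theorem np3 : nthPrime (q 3) = 43 := by
  rw [q_succ (by norm_num), np2]
  exact nthPrime_of_count (by norm_num) (by norm_num) (by norm_num [Nat.count_succ])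
theorem np4 : nthPrime (q 4) = 443 := by
  rw [q_succ (by norm_num), np3]
  exact nthPrime_of_count (by norm_num) (by norm_num) count443
theorem np5 : nthPrime (q 5) = 6883 := by
  rw [q_succ (by norm_num), np4]
  exact nthPrime_of_count (by norm_num) (by norm_num) count6883

theorem nthPrime_prime (m : ℕ) : (nthPrime m).Prime := Nat.prime_nth_prime _

theorem pi_nthPrime {m : ℕ} (hm : 1 ≤ m) : Nat.primeCounting (nthPrime m) = m := by
  rw [Nat.primeCounting, Nat.primeCounting', nthPrime,
    Nat.count_nth_succ (fun hf => absurd hf Nat.infinite_setOfPred_prime)]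
  omega

theorem pi_nthPrime_sub {m : ℕ} : Nat.primeCounting (nthPrime m - 1) = m - 1 := by
  rw [Nat.primeCounting_sub_one, nthPrime, Nat.primeCounting'_nth_eq]

theorem two_P_le {m : ℕ} (hm : 1 ≤ m) : m + 1 ≤ nthPrime m := by
  have := Nat.add_two_le_nth_prime (m - 1)
  rw [nthPrime]; omega

theorem q_pos (k : ℕ) : 1 ≤ q k := by
  rcases k with _ | _ | k
  · exact le_rfl
  · exact le_rfl
  · have := (nthPrime_prime (q (k+1))).pos
    rw [q_succ (by omega)]; omega

theorem qseq : QSeq (fun k => (nthPrime (q k) : ℝ))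
    (fun k => (nthPrime (q (k + 1)) : ℝ) / nthPrime (q k)) where
  pos k _ := by exact_mod_cast (nthPrime_prime _).pos
  rpos k hk := by
    have h0 : (0:ℝ) < nthPrime (q k) := by exact_mod_cast (nthPrime_prime _).pos
    rw [le_div_iff₀ h0, q_succ hk]
    have := two_P_le (m := 2 * nthPrime (q k)) (by have := (nthPrime_prime (q k)).pos; omega)
    exact_mod_cast (by omega : 2 * nthPrime (q k) ≤ nthPrime (2 * nthPrime (q k)))
  step k _ := by
    have h0 : (0:ℝ) < nthPrime (q k) := by exact_mod_cast (nthPrime_prime _).pos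
    field_simp
  up k hk := by
    have h0 : (0:ℝ) < nthPrime (q k) := by exact_mod_cast (nthPrime_prime _).pos
    have h1 := pi_up (nthPrime (q (k+1))) (nthPrime_prime _).pos
    rw [pi_nthPrime (q_pos _)] at h1
    rw [le_div_iff₀ h0]
    have e : (q (k+1) : ℝ) = 2 * nthPrime (q k) := by rw [q_succ hk]; push_cast; ring
    rw [e] at h1
    linarith
  lo k hk := by
    have h0 : (0:ℝ) < nthPrime (q k) := by exact_mod_cast (nthPrime_prime _).pos
    have e : (q (k+1) : ℝ) = 2 * nthPrime (q k) := by rw [q_succ hk]; push_cast; ring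
    generalize hx : nthPrime (q (k+1)) = x
    have xp : 2 ≤ x := hx ▸ (nthPrime_prime _).two_le
    have h2 : Nat.primeCounting (x - 1) = q (k+1) - 1 := by rw [← hx, pi_nthPrime_sub]
    have h3 := (Chebyshev.psi_ge (x - 1)).trans (Chebyshev.psi_le_primeCounting_mul_log (x - 1))
    rw [h2] at h3
    have hxr : (2:ℝ) ≤ x := by exact_mod_cast xp
    push_cast [Nat.cast_sub (show 1 ≤ x by omega), Nat.cast_sub (q_pos (k+1))] at h3
    rw [e, sub_add_cancel] at h3
    have h4 : Real.log ((x:ℝ) - 1) ≤ Real.log x := Real.log_le_log (by linarith) (by linarith)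
    have h5 : (1:ℝ) ≤ 2 * nthPrime (q k) := by rw [← e]; exact_mod_cast q_pos (k+1)
    have h6 : (2 * (nthPrime (q k) : ℝ) - 1) * Real.log ((x:ℝ) - 1)
        ≤ (2 * (nthPrime (q k) : ℝ) - 1) * Real.log x :=
      mul_le_mul_of_nonneg_left h4 (by linarith)
    have l2 : 0 < Real.log 2 := Real.log_pos (by norm_num)
    have h7 : ((x:ℝ) - 1) ≤ 2 * nthPrime (q k) * Real.logb 2 x := by
      rw [Real.logb, ← mul_div_assoc, le_div_iff₀ l2]
      linarith
    rw [div_le_iff₀ h0, add_mul, div_mul_cancel₀ _ h0.ne']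
    linarith
  p1 := by simp only [np1]; norm_num
  p2 := by simp only [np2]; norm_num
  p3 := by simp only [np3]; norm_num
  p4 := by simp only [np4]; norm_num
  p5 := by simp only [np5]; norm_num

/-- For all positive integers `k₁` and `k₂`, one has `p_{q_{k₁}} · p_{q_{k₂}} ≤ q_{k₁+k₂}`. -/
theorem nthPrime_q_mul_nthPrime_q_le (k₁ k₂ : ℕ) (hk₁ : 1 ≤ k₁) (hk₂ : 1 ≤ k₂) :
    nthPrime (q k₁) * nthPrime (q k₂) ≤ q (k₁ + k₂) := by
  have e : k₁ + k₂ = (k₁ + k₂ - 1) + 1 := by omega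
  rw [e, q_succ (by omega)]
  rcases le_total k₁ k₂ with h | h
  · exact_mod_cast qseq.main k₁ k₂ hk₁ h
  · rw [mul_comm, add_comm k₁]
    exact_mod_cast qseq.main k₂ k₁ hk₂ h
end

section
/- For every integer n ≥ 2: (i) Topological(2^n) holds and Leaves(2^n) = n, i.e. 2^n is the Matula number of the star K_{1,n}; and (ii) for every positive integer m with Topological(m) and Leaves(m) = n, one has m ≥ 2^n. In other words, the star K_{1,n} (a root with n leaves attached to it) has the smallest Matula number among all topological trees with n leaves, and M(K_{1,n}) = 2^n. -/
/-- `MatulaTopological n` says that `n` is the Matula number of a topological tree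
(a rooted tree with no vertex of outdegree 1): `MatulaTopological 1` holds, and for
`n > 1`, `MatulaTopological n` holds iff `n` has at least two prime factors counted
with multiplicity and `MatulaTopological m` holds for every positive `m` such that the
prime `nthPrime m` divides `n`.  (Since `nthPrime m ∣ n` forces `m < n`, this
recursion is well-founded, so the inductive predicate is its unique fixed point.) -/
inductive MatulaTopological : ℕ → Prop
  | one : MatulaTopological 1
  | node (n : ℕ) (hn : 1 < n) (hbranches : 2 ≤ n.primeFactorsList.length)
      (hrec : ∀ m : ℕ, 1 ≤ m → nthPrime m ∣ n → MatulaTopological m) :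
      MatulaTopological n

/-- `MatulaBinary n` says that `n` is the Matula number of a binary tree (every vertex
has outdegree 0 or 2): `MatulaBinary 1` holds, and for `n > 1`, `MatulaBinary n` holds
iff `n = nthPrime a * nthPrime b` for some positive `a`, `b` with `MatulaBinary a`
and `MatulaBinary b`. -/
inductive MatulaBinary : ℕ → Prop
  | one : MatulaBinary 1
  | node (a b : ℕ) (ha : 1 ≤ a) (hb : 1 ≤ b)
      (hA : MatulaBinary a) (hB : MatulaBinary b) :
      MatulaBinary (nthPrime a * nthPrime b)

lemma count_prime_add_two_le (t : ℕ) (ht : 2 ≤ t) : Nat.count Nat.Prime t + 2 ≤ t := by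
  induction t, ht using Nat.le_induction with
  | base =>
      simp [Nat.count_succ, Nat.count_zero]
      exact ⟨Nat.not_prime_zero, Nat.not_prime_one⟩
  | succ n hn ih =>
      have : Nat.count Nat.Prime (n + 1) ≤ Nat.count Nat.Prime n + 1 := by
        rw [Nat.count_succ]; split <;> omega
      omega

/-- `matulaLeaves n` is the number of leaves of the rooted tree with Matula number `n`:
`matulaLeaves 1 = 1`, and if `n > 1` has multiset of prime factors
`nthPrime m₁, …, nthPrime m_r` (counted with multiplicity), then
`matulaLeaves n = matulaLeaves m₁ + ⋯ + matulaLeaves m_r`.  Here the 1-indexed prime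
index of a prime factor `t` is recovered as `Nat.count Nat.Prime t + 1`, since
`nthPrime (Nat.count Nat.Prime t + 1) = Nat.nth Nat.Prime (Nat.count Nat.Prime t) = t`
for prime `t`. -/
def matulaLeaves (n : ℕ) : ℕ :=
  if n ≤ 1 then 1
  else (n.primeFactorsList.attach.map
    (fun t => matulaLeaves (Nat.count Nat.Prime t.1 + 1))).sum
decreasing_by
  rename_i hn
  have hmem := t.2
  have hp : (t : ℕ).Prime := Nat.prime_of_mem_primeFactorsList hmem
  have hdvd : (t : ℕ) ∣ n := Nat.dvd_of_mem_primeFactorsList hmem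
  have hle : (t : ℕ) ≤ n := Nat.le_of_dvd (by omega) hdvd
  have := count_prime_add_two_le t.1 hp.two_le
  omega

lemma matulaLeaves_eq (n : ℕ) (hn : 1 < n) : matulaLeaves n =
    (n.primeFactorsList.map (fun t => matulaLeaves (Nat.count Nat.Prime t + 1))).sum := by
  rw [matulaLeaves, if_neg (by omega)]
  congr 1
  exact List.attach_map_val (l := n.primeFactorsList)
    (f := fun t => matulaLeaves (Nat.count Nat.Prime t + 1))

lemma count_prime_two : Nat.count Nat.Prime 2 = 0 := by
  have := count_prime_add_two_le 2 le_rfl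
  omega

lemma matulaLeaves_one : matulaLeaves 1 = 1 := by
  rw [matulaLeaves]; simp

lemma two_pow_sum_le (f : ℕ → ℕ) (l : List ℕ) (h : ∀ t ∈ l, 2 ^ f t ≤ t) :
    2 ^ (l.map f).sum ≤ l.prod := by
  induction l with
  | nil => simp
  | cons a l ih =>
      simp only [List.map_cons, List.sum_cons, List.prod_cons, pow_add]
      exact Nat.mul_le_mul (h a (by simp)) (ih fun t ht => h t (by simp [ht]))

/-- The bound holds for every Matula number `m ≥ 2`. -/
lemma two_pow_matulaLeaves_le (m : ℕ) (hm : 1 < m) : 2 ^ matulaLeaves m ≤ m := by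
  induction m using Nat.strong_induction_on with
  | _ m ih =>
    rw [matulaLeaves_eq m hm]
    conv_rhs => rw [← Nat.prod_primeFactorsList (n := m) (by omega)]
    apply two_pow_sum_le
    intro t ht
    have hp : t.Prime := Nat.prime_of_mem_primeFactorsList ht
    have hle : t ≤ m := Nat.le_of_dvd (by omega) (Nat.dvd_of_mem_primeFactorsList ht)
    have hc := count_prime_add_two_le t hp.two_le
    rcases Nat.eq_zero_or_pos (Nat.count Nat.Prime t) with h0 | h0
    · rw [h0, zero_add, matulaLeaves_one]
      exact hp.two_le
    · have := ih (Nat.count Nat.Prime t + 1) (by omega) (by omega)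
      omega

/-- For every `n ≥ 2`: (i) `2^n` is the Matula number of a topological tree with `n`
leaves (namely the star `K_{1,n}`), and (ii) every topological tree with `n` leaves has
Matula number at least `2^n`.  That is, the star `K_{1,n}` has the smallest Matula number
among all topological trees with `n` leaves, and `M(K_{1,n}) = 2^n`. -/
theorem star_minimizes_matula (n : ℕ) (hn : 2 ≤ n) :
    (MatulaTopological (2 ^ n) ∧ matulaLeaves (2 ^ n) = n) ∧
      ∀ m : ℕ, 1 ≤ m → MatulaTopological m → matulaLeaves m = n → 2 ^ n ≤ m := by
  have h1 : 1 < 2 ^ n := Nat.one_lt_two_pow (by omega)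
  refine ⟨⟨?_, ?_⟩, ?_⟩
  · refine MatulaTopological.node _ h1 ?_ ?_
    · rw [Nat.Prime.primeFactorsList_pow Nat.prime_two]
      simpa using hn
    · intro m hm hd
      have hge := Nat.add_two_le_nth_prime (m - 1)
      have hp : (nthPrime m).Prime := Nat.prime_nth_prime (m - 1)
      have h2 : nthPrime m = 2 :=
        (Nat.prime_dvd_prime_iff_eq hp Nat.prime_two).1 (hp.dvd_of_dvd_pow hd)
      unfold nthPrime at h2
      have : m = 1 := by omega
      subst this
      exact MatulaTopological.one
  · rw [matulaLeaves_eq _ h1, Nat.Prime.primeFactorsList_pow Nat.prime_two]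
    simp [count_prime_two, matulaLeaves_one]
  · intro m hm _ hl
    have hm1 : 1 < m := by
      rcases Nat.lt_or_ge 1 m with h | h
      · exact h
      · have : m = 1 := by omega
        subst this
        rw [matulaLeaves_one] at hl
        omega
    rw [← hl]
    exact two_pow_matulaLeaves_le m hm1
end

section
/- For every positive integer n and every positive integer m with Binary(m) and Leaves(m) = n, one has m ≤ q_n. That is, the binary caterpillar F_n also has the greatest Matula number among all binary trees with n leaves. -/
theorem mc_choose_three (n : ℕ) : 4 ^ n * (3 * n).choose n ≤ 27^n := by
  have h := Finset.single_le_sum (f := fun k => 1 ^ k * 2 ^ (3*n - k) * (3 * n).choose k) (fun _ _ => Nat.zero_le _) (Finset.mem_range.2 (show n < 3*n+1 by omega))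
  have e := add_pow 1 2 (3*n)
  simp only [Nat.cast_id] at e
  rw [← e] at h
  simp only [one_pow, one_mul] at h
  rw [show 3*n - n = 2*n by omega, pow_mul, pow_mul] at h
  simpa using h

theorem mc_choose_six (n : ℕ) : (6 * n).choose (3 * n) ≤ 64 ^ n := by
  have h := Nat.choose_le_two_pow (6 * n) (3 * n)
  rw [pow_mul] at h
  simpa using h

theorem mc_dvd_choose {p a b : ℕ} (hp : p.Prime) (h : p ≤ b % p + a % p) :
    p ∣ (a + b).choose b := by
  apply Nat.dvd_of_factorization_pos
  rw [Nat.factorization_choose' hp (Nat.lt_succ_self _)]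
  apply Finset.card_ne_zero_of_mem (a := 1)
  simp only [Finset.mem_filter, Finset.mem_Ico, pow_one]
  refine ⟨⟨le_rfl, ?_⟩, h⟩
  have : 0 < Nat.log p (a + b) := by
    apply Nat.log_pos hp.one_lt
    have := Nat.mod_le a p
    have := Nat.mod_le b p
    omega
  omega

theorem mc_dvd {p n : ℕ} (hp : p.Prime) (h1 : n < p) (h2 : p ≤ 6 * n) :
    p ∣ (6 * n).choose (3 * n) * (3 * n).choose n := by
  have e6 : 6 * n = 3 * n + 3 * n := by ring
  have e3 : 3 * n = 2 * n + n := by ring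
  have m1 : n % p = n := Nat.mod_eq_of_lt h1
  by_cases c1 : 3 * n < p
  · apply Dvd.dvd.mul_right
    rw [e6]
    apply mc_dvd_choose hp
    rw [Nat.mod_eq_of_lt c1]; omega
  by_cases c2 : 2 * n < p
  · apply Dvd.dvd.mul_left
    rw [e3]
    apply mc_dvd_choose hp
    rw [Nat.mod_eq_of_lt c2, m1]; omega
  by_cases c3 : 3 * n < 2 * p
  · apply Dvd.dvd.mul_right
    rw [e6]
    apply mc_dvd_choose hp
    have : 3 * n % p = 3 * n - p := by
      rw [Nat.mod_eq_sub_mod (by omega), Nat.mod_eq_of_lt (by omega)]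
    omega
  · apply Dvd.dvd.mul_left
    rw [e3]
    apply mc_dvd_choose hp
    have : 2 * n % p = 2 * n - p := by
      rw [Nat.mod_eq_sub_mod (by omega), Nat.mod_eq_of_lt (by omega)]
    omega

theorem mc_primorial (n : ℕ) : primorial (6 * n) ≤ primorial n * 432 ^ n := by
  have hX : (6 * n).choose (3 * n) * (3 * n).choose n ≤ 432 ^ n := by
    have h1 := mc_choose_three n
    have h2 := mc_choose_six n
    have : 4 ^ n * ((6 * n).choose (3 * n) * (3 * n).choose n) ≤ 4 ^ n * 432 ^ n := by
      calc _ = (6 * n).choose (3 * n) * (4 ^ n * (3 * n).choose n) := by ring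
        _ ≤ 64 ^ n * 27 ^ n := Nat.mul_le_mul h2 h1
        _ = _ := by rw [← mul_pow, ← mul_pow]; norm_num
    exact Nat.le_of_mul_le_mul_left this (by positivity)
  have hsplit : primorial (6 * n) = primorial n * ∏ p ∈ (Finset.Ioc n (6*n)).filter Nat.Prime, p := by
    unfold primorial
    rw [← Finset.prod_union]
    · congr 1
      ext p
      simp only [Finset.mem_filter, Finset.mem_union, Finset.mem_range, Finset.mem_Ioc]
      constructor
      · rintro ⟨h, hp⟩
        by_cases c : p < n + 1
        · exact Or.inl ⟨c, hp⟩
        · exact Or.inr ⟨by omega, hp⟩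
      · rintro (⟨h, hp⟩ | ⟨h, hp⟩)
        · exact ⟨by omega, hp⟩
        · exact ⟨by omega, hp⟩
    · rw [Finset.disjoint_left]
      intro p hp hq
      simp only [Finset.mem_filter, Finset.mem_range, Finset.mem_Ioc] at hp hq
      omega
  rw [hsplit]
  apply Nat.mul_le_mul_left
  refine le_trans (Nat.le_of_dvd ?_ (Finset.prod_primes_dvd ((6 * n).choose (3 * n) * (3 * n).choose n) ?_ ?_)) hX
  · exact Nat.mul_pos (Nat.choose_pos (by omega)) (Nat.choose_pos (by omega))
  · intro p hp
    exact (Finset.mem_filter.1 hp).2.prime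
  · intro p hp
    simp only [Finset.mem_filter, Finset.mem_Ioc] at hp
    exact mc_dvd hp.2 hp.1.1 hp.1.2


theorem mc_log432_le : Real.log 432 ≤ 8.76 * Real.log 2 := by
  have h : Real.log ((432:ℝ) ^ 25) ≤ Real.log ((2:ℝ) ^ 219) :=
    Real.log_le_log (by norm_num) (by norm_num)
  rw [Real.log_pow, Real.log_pow] at h
  norm_num at h
  linarith

theorem mc_le_log432 : 8.75 * Real.log 2 ≤ Real.log 432 := by
  have h : Real.log ((2:ℝ) ^ 35) ≤ Real.log ((432:ℝ) ^ 4) :=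
    Real.log_le_log (by norm_num) (by norm_num)
  rw [Real.log_pow, Real.log_pow] at h
  norm_num at h
  linarith

theorem mc_theta (N : ℕ) (hN : 1 ≤ N) :
    Real.log (primorial N) ≤ Real.log 432 / 5 * N + 4 * Real.log N := by
  induction N using Nat.strong_induction_on with
  | _ N ih =>
  have hl := Real.log_two_gt_d9
  have hA := mc_le_log432
  by_cases hs : N < 30
  · have h4 : Real.log (primorial N) ≤ 2 * Real.log 2 * N := by
      have h : Real.log (primorial N) ≤ Real.log ((4:ℝ) ^ N) :=
        Real.log_le_log (by exact_mod_cast primorial_pos N) (by exact_mod_cast primorial_le_four_pow N)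
      rw [Real.log_pow, show (4:ℝ) = 2 ^ 2 by norm_num, Real.log_pow] at h
      push_cast at h
      linarith
    have hAN : 1.75 * Real.log 2 * N ≤ Real.log 432 / 5 * N :=
      mul_le_mul_of_nonneg_right (by linarith) (by positivity)
    rcases Nat.lt_or_ge N 2 with h2 | h2
    · have : N = 1 := by omega
      subst this
      simp
      positivity
    rcases Nat.lt_or_ge N 16 with h16 | h16
    · have : Real.log 2 ≤ Real.log N := Real.log_le_log (by norm_num) (by exact_mod_cast h2)
      have h16' : (N:ℝ) ≤ 16 := by exact_mod_cast h16.le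
      nlinarith
    · have : Real.log ((2:ℝ)^4) ≤ Real.log N :=
        Real.log_le_log (by norm_num) (by norm_num; exact_mod_cast h16)
      rw [Real.log_pow] at this
      push_cast at this
      have h16' : (N:ℝ) ≤ 30 := by exact_mod_cast hs.le
      nlinarith
  · obtain ⟨n, hn⟩ : ∃ n, n = (N + 5) / 6 := ⟨_, rfl⟩
    have h1 : N ≤ 6 * n := by omega
    have h2 : 6 * n ≤ N + 5 := by omega
    have h3 := ih n (by omega) (by omega)
    have h4 : Real.log (primorial N) ≤ Real.log ((primorial n : ℝ) * 432 ^ n) :=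
      Real.log_le_log (by exact_mod_cast primorial_pos N)
        (by exact_mod_cast (primorial_mono h1).trans (mc_primorial n))
    rw [Real.log_mul (by exact_mod_cast (primorial_pos n).ne') (by positivity), Real.log_pow] at h4
    have h2' : 6 * (n:ℝ) ≤ N + 5 := by exact_mod_cast h2
    have hN' : (30:ℝ) ≤ N := by exact_mod_cast not_lt.1 hs
    have hn0 : (0:ℝ) < n := by
      have : 0 < n := by omega
      exact_mod_cast this
    have h5 : Real.log (432 * (n:ℝ) ^ 4) ≤ Real.log ((N:ℝ) ^ 4) := by
      apply Real.log_le_log (by positivity)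
      have : (n:ℝ) ≤ 7 / 36 * N := by linarith
      have := pow_le_pow_left₀ hn0.le this 4
      have hp : (0:ℝ) < (N:ℝ) ^ 4 := by positivity
      rw [mul_pow] at this
      norm_num at this
      linarith
    rw [Real.log_mul (by norm_num) (by positivity), Real.log_pow, Real.log_pow] at h5
    push_cast at h5
    have hA0 : 0 < Real.log 432 := by positivity
    nlinarith

theorem mc_prime (k : ℕ) : (nthPrime k).Prime := Nat.prime_nth_prime _

theorem mc_mono {a b : ℕ} (h : a ≤ b) : nthPrime a ≤ nthPrime b :=
  (Nat.nth_le_nth Nat.infinite_setOfPred_prime).2 (by omega)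

theorem mc_count (k : ℕ) : Nat.count Nat.Prime (nthPrime k) = k - 1 :=
  Nat.count_nth_of_infinite Nat.infinite_setOfPred_prime _

theorem mc_pi (k : ℕ) (hk : 1 ≤ k) : Nat.primeCounting (nthPrime k) = k := by
  rw [Nat.primeCounting, Nat.primeCounting', Nat.count_succ, mc_count, if_pos (mc_prime k)]
  omega

theorem mc_eq {p k : ℕ} (hp : p.Prime) (h : Nat.count Nat.Prime p + 1 = k) : nthPrime k = p := by
  subst h
  exact Nat.nth_count hp

theorem mc_p2 : nthPrime 1 = 2 := mc_eq (by norm_num) (by decide +kernel)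
theorem mc_p7 : nthPrime 4 = 7 := mc_eq (by norm_num) (by decide +kernel)
theorem mc_p43 : nthPrime 14 = 43 := mc_eq (by norm_num) (by decide +kernel)
theorem mc_p59 : nthPrime 17 = 59 := mc_eq (by norm_num) (by decide +kernel)
theorem mc_p443 : nthPrime 86 = 443 := mc_eq (by norm_num) (by decide +kernel)

theorem mc_three (n : ℕ) (hn : 17 ≤ n) : 3 * n ≤ nthPrime n := by
  have h1 := mc_mono hn
  rw [mc_p59] at h1
  obtain ⟨m, hm⟩ := Nat.exists_eq_add_of_le h1
  have h2 := Nat.primeCounting'_add_le (a := 6) (k := 59) (by norm_num) (by norm_num) m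
  rw [← hm, Nat.primeCounting', mc_count] at h2
  have h3 : Nat.count Nat.Prime 59 = 16 := by decide +kernel
  have h4 : Nat.totient 6 = 2 := by decide
  rw [h3, h4] at h2
  omega

noncomputable def mcS (n : ℕ) : ℝ := ∑ k ∈ Finset.range n, Real.log (nthPrime (k + 1))

theorem mcS_le (n : ℕ) (hn : 1 ≤ n) : mcS n ≤ Real.log (primorial (nthPrime n)) := by
  unfold primorial
  rw [Nat.cast_prod, Real.log_prod (fun p hp => by
    exact_mod_cast (Finset.mem_filter.1 hp).2.ne_zero)]
  have hinj : Set.InjOn (fun k => nthPrime (k + 1)) (Finset.range n : Set ℕ) := by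
    intro a _ b _ hab
    have := congrArg (Nat.count Nat.Prime) hab
    simp only [mc_count] at this
    omega
  unfold mcS
  rw [← Finset.sum_image (f := fun p : ℕ => Real.log p) hinj]
  apply Finset.sum_le_sum_of_subset_of_nonneg
  · intro p hp
    obtain ⟨k, hk, rfl⟩ := Finset.mem_image.1 hp
    have := Finset.mem_range.1 hk
    simp only [Finset.mem_filter, Finset.mem_range]
    exact ⟨Nat.lt_succ_of_le (mc_mono (by omega)), mc_prime _⟩
  · intro p _ _
    exact Real.log_natCast_nonneg p

theorem mcS_base : 17 * Real.log 17 ≤ mcS 17 := by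
  have e : mcS 17 = Real.log ((∏ k ∈ Finset.range 17, nthPrime (k + 1) : ℕ) : ℝ) := by
    rw [Nat.cast_prod, Real.log_prod (fun p hp => by exact_mod_cast (mc_prime _).ne_zero)]
    rfl
  have e2 : ∏ k ∈ Finset.range 17, nthPrime (k + 1) = 1922760350154212639070 := by
    simp only [Finset.prod_range_succ, Finset.prod_range_zero, Nat.reduceAdd]
    rw [mc_eq (p := 2) (k := 1) (by norm_num) (by decide +kernel),
      mc_eq (p := 3) (k := 2) (by norm_num) (by decide +kernel),
      mc_eq (p := 5) (k := 3) (by norm_num) (by decide +kernel),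
      mc_eq (p := 7) (k := 4) (by norm_num) (by decide +kernel),
      mc_eq (p := 11) (k := 5) (by norm_num) (by decide +kernel),
      mc_eq (p := 13) (k := 6) (by norm_num) (by decide +kernel),
      mc_eq (p := 17) (k := 7) (by norm_num) (by decide +kernel),
      mc_eq (p := 19) (k := 8) (by norm_num) (by decide +kernel),
      mc_eq (p := 23) (k := 9) (by norm_num) (by decide +kernel),
      mc_eq (p := 29) (k := 10) (by norm_num) (by decide +kernel),
      mc_eq (p := 31) (k := 11) (by norm_num) (by decide +kernel),
      mc_eq (p := 37) (k := 12) (by norm_num) (by decide +kernel),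
      mc_eq (p := 41) (k := 13) (by norm_num) (by decide +kernel),
      mc_eq (p := 43) (k := 14) (by norm_num) (by decide +kernel),
      mc_eq (p := 47) (k := 15) (by norm_num) (by decide +kernel),
      mc_eq (p := 53) (k := 16) (by norm_num) (by decide +kernel), mc_p59]
    norm_num
  rw [e, e2]
  have : Real.log ((17:ℝ) ^ 17) ≤ Real.log ((1922760350154212639070 : ℕ) : ℝ) :=
    Real.log_le_log (by norm_num) (by norm_num)
  rwa [Real.log_pow] at this

theorem mcS_grow (s : ℝ) (hs : 0 < s) (n0 : ℕ) (h0 : 1 ≤ n0)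
    (h : ∀ k : ℕ, n0 ≤ k → s * k ≤ nthPrime k) (n : ℕ) (hn : n0 ≤ n) :
    mcS n0 - n0 * Real.log n0 + (Real.log s - 1) * (n - n0) + n * Real.log n ≤ mcS n := by
  induction n, hn using Nat.le_induction with
  | base => simp
  | succ n hn ih =>
    have e : mcS (n + 1) = mcS n + Real.log (nthPrime (n + 1)) := Finset.sum_range_succ _ _
    have hp : (0:ℝ) < n := by
      have : 0 < n := by omega
      exact_mod_cast this
    have h1 : Real.log (s * ((n + 1 : ℕ) : ℝ)) ≤ Real.log (nthPrime (n + 1)) :=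
      Real.log_le_log (by positivity) (h (n + 1) (by omega))
    rw [Real.log_mul hs.ne' (by positivity)] at h1
    have h2 : Real.log (((n + 1 : ℕ) : ℝ) / n) ≤ ((n + 1 : ℕ) : ℝ) / n - 1 :=
      Real.log_le_sub_one_of_pos (by positivity)
    rw [Real.log_div (by positivity) hp.ne'] at h2
    have h3 : (n:ℝ) * (Real.log ((n + 1 : ℕ) : ℝ) - Real.log n) ≤ 1 := by
      have := mul_le_mul_of_nonneg_left h2 hp.le
      refine this.trans (le_of_eq ?_)
      push_cast
      field_simp
      ring
    rw [e]
    push_cast at *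
    nlinarith

/-- Chebyshev type lower bound for primes, first form. -/
theorem mc_I0 (n : ℕ) (hn : 17 ≤ n) : n * Real.log n ≤ mcS n := by
  have h := mcS_grow 3 (by norm_num) 17 (by norm_num)
    (fun k hk => by exact_mod_cast mc_three k hk) n hn
  have hb := mcS_base
  have h3 : 1 ≤ Real.log 3 := by
    rw [Real.le_log_iff_exp_le (by norm_num)]
    linarith [Real.exp_one_lt_d9]
  have hn' : (17:ℝ) ≤ n := by exact_mod_cast hn
  push_cast at h
  nlinarith

theorem mcS_up (n : ℕ) (hn : 1 ≤ n) :
    mcS n ≤ 1.752 * Real.log 2 * nthPrime n + 4 * Real.log (nthPrime n) := by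
  have h1 := mcS_le n hn
  have h2 := mc_theta (nthPrime n) (mc_prime n).one_lt.le
  have h3 := mc_log432_le
  have : (0:ℝ) ≤ nthPrime n := by positivity
  nlinarith

theorem mc_lower (s : ℝ) (hs : 0 < s) (n : ℕ) (hn : 17 ≤ n) 
    (h : 1.752 * Real.log 2 * s + 4 * Real.log (s * n) / n ≤ Real.log n) :
    s * n ≤ nthPrime n := by
  by_contra hc
  push Not at hc
  have h1 := mc_I0 n hn
  have h2 := mcS_up n (by omega)
  have hl : 0 < Real.log 2 := by positivity
  have hn0 : (0:ℝ) < n := by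
    have : 0 < n := by omega
    exact_mod_cast this
  have h3 : Real.log (nthPrime n) ≤ Real.log (s * n) :=
    Real.log_le_log (by exact_mod_cast (mc_prime n).pos) hc.le
  have h4 := mul_le_mul_of_nonneg_left h hn0.le
  have h5 : (n:ℝ) * (1.752 * Real.log 2 * s + 4 * Real.log (s * n) / n) =
    1.752 * Real.log 2 * (s * n) + 4 * Real.log (s * n) := by
    field_simp
  rw [h5] at h4
  have h6 : 1.752 * Real.log 2 * nthPrime n < 1.752 * Real.log 2 * (s * n) :=
    mul_lt_mul_of_pos_left hc (by positivity)
  linarith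

theorem mc_lower8 (s c : ℝ) (hs : 1 ≤ s) (hs8 : s ≤ 8) (n : ℕ) (hn : 886 ≤ n)
    (hc : c * Real.log 2 ≤ Real.log n) (hsc : 1.752 * s + 0.1 ≤ c) (hc15 : c ≤ 15) :
    s * n ≤ nthPrime n := by
  apply mc_lower s (by linarith) n (by omega)
  have hl : 0 < Real.log 2 := by positivity
  have hn' : (886:ℝ) ≤ n := by exact_mod_cast hn
  have hn0 : (0:ℝ) < n := by linarith
  have h1 : Real.log s ≤ 3 * Real.log 2 := by
    have := Real.log_le_log (by linarith) hs8
    rw [show (8:ℝ) = 2 ^ 3 by norm_num, Real.log_pow] at this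
    exact_mod_cast this
  rw [Real.log_mul (by linarith) hn0.ne']
  have hln : 0 ≤ Real.log n := Real.log_natCast_nonneg n
  have h2 : 4 * (Real.log s + Real.log n) / n ≤ 4 * (3 * Real.log 2 + Real.log n) / 886 := by
    gcongr
  have h3 : (1.752 * s + 0.1) * Real.log 2 ≤ c * Real.log 2 := by gcongr
  have h4 : c * Real.log 2 ≤ 15 * Real.log 2 := by gcongr
  have h5 : (882 / 886 : ℝ) * (c * Real.log 2) ≤ 882 / 886 * Real.log n := by gcongr
  linarith

theorem mc_five (n : ℕ) (hn : 886 ≤ n) : 5 * (n : ℝ) ≤ nthPrime n := by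
  apply mc_lower8 5 9.5 (by norm_num) (by norm_num) n hn _ (by norm_num) (by norm_num)
  have hn' : (886:ℝ) ≤ n := by exact_mod_cast hn
  have h : Real.log ((2:ℝ) ^ 19) ≤ Real.log ((n:ℝ) ^ 2) :=
    Real.log_le_log (by norm_num) (by nlinarith)
  rw [Real.log_pow, Real.log_pow] at h
  push_cast at h
  linarith

theorem mc_six (n : ℕ) (hn : 16384 ≤ n) : 6 * (n : ℝ) ≤ nthPrime n := by
  apply mc_lower8 6 14 (by norm_num) (by norm_num) n (by omega) _ (by norm_num) (by norm_num)
  have hn' : (16384:ℝ) ≤ n := by exact_mod_cast hn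
  have h : Real.log ((2:ℝ) ^ 14) ≤ Real.log n :=
    Real.log_le_log (by norm_num) (by linarith)
  rw [Real.log_pow] at h
  exact_mod_cast h

theorem mc_eight (n : ℕ) (hn : 32768 ≤ n) : 8 * (n : ℝ) ≤ nthPrime n := by
  apply mc_lower8 8 15 (by norm_num) (by norm_num) n (by omega) _ (by norm_num) (by norm_num)
  have hn' : (32768:ℝ) ≤ n := by exact_mod_cast hn
  have h : Real.log ((2:ℝ) ^ 15) ≤ Real.log n :=
    Real.log_le_log (by norm_num) (by linarith)
  rw [Real.log_pow] at h
  exact_mod_cast h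

theorem mc_I2 (n : ℕ) (hn : 1900000 ≤ n) : n * (Real.log n + 1.06) ≤ mcS n := by
  have h := mcS_grow 8 (by norm_num) 32768 (by norm_num) mc_eight n (by omega)
  have hb := mc_I0 32768 (by norm_num)
  have hn' : (1900000:ℝ) ≤ n := by exact_mod_cast hn
  have hl := Real.log_two_gt_d9
  have h8 : Real.log 8 = 3 * Real.log 2 := by
    rw [show (8:ℝ) = 2 ^ 3 by norm_num, Real.log_pow]; norm_num
  have h1 : (1.0794 : ℝ) * (n - 32768) ≤ (Real.log 8 - 1) * (n - 32768) := by
    apply mul_le_mul_of_nonneg_right _ (by linarith)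
    linarith
  push_cast at h hb
  linarith

theorem mc_II (m : ℕ) (hm : 1 ≤ m) :
    nthPrime m * Real.log 2 - Real.log (nthPrime m + 1) ≤ m * Real.log (nthPrime m) := by
  have h1 := Chebyshev.psi_ge (nthPrime m)
  have h2 := Chebyshev.psi_le_primeCounting_mul_log (nthPrime m)
  rw [mc_pi m hm] at h2
  linarith

theorem mc_real (x N : ℝ) (hx : 443 ≤ x) (hN : 4430 ≤ N)
    (h1 : N * Real.log 2 ≤ 2 * x * Real.log N + Real.log (N + 1))
    (h2 : Real.log x + Real.log N + 1.0595 ≤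
      1.752 * Real.log N + 0.876 * (Real.log (N + 1) / x)) : False := by
  have hl := Real.log_two_gt_d9
  have hl' := Real.log_two_lt_d9
  have hx0 : 0 < x := by linarith
  have hN0 : 0 < N := by linarith
  obtain ⟨L, hL⟩ : ∃ L, L = Real.log N := ⟨_, rfl⟩
  have hL1 : 1 ≤ L := by
    rw [hL, Real.le_log_iff_exp_le hN0]
    linarith [Real.exp_one_lt_d9]
  have hN1 : Real.log (N + 1) ≤ 1.001 * L := by
    have h : Real.log ((N + 1) / N) ≤ (N + 1) / N - 1 := Real.log_le_sub_one_of_pos (by positivity)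
    rw [Real.log_div (by positivity) hN0.ne'] at h
    have : (N + 1) / N - 1 ≤ 0.001 := by
      rw [show (N + 1) / N - 1 = 1 / N by field_simp; ring, div_le_iff₀ hN0]
      linarith
    rw [hL] at hL1 ⊢
    linarith
  rw [← hL] at h1 h2
  have h3 : Real.log (N + 1) / x ≤ 1.001 * L / 443 := by gcongr
  have h4 : Real.log x + 1.0595 ≤ 0.754 * L := by linarith
  have h5 : 8.5 * Real.log 2 ≤ Real.log x := by
    have h : Real.log ((2:ℝ) ^ 17) ≤ Real.log (x ^ 2) :=
      Real.log_le_log (by norm_num) (by nlinarith)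
    rw [Real.log_pow, Real.log_pow] at h
    push_cast at h
    linarith
  have h6 : N ≤ 2.89 * (x * L) := by
    have : 443 * L ≤ x * L := by gcongr
    have : N * 0.6931471803 ≤ N * Real.log 2 := by gcongr
    linarith
  have h7 : L ≤ Real.log 2.89 + (Real.log x + Real.log L) := by
    have := Real.log_le_log hN0 h6
    rw [Real.log_mul (by norm_num) (by positivity), Real.log_mul hx0.ne' (by positivity)] at this
    linarith
  have h8 : Real.log 2.89 ≤ 1.55 * Real.log 2 := by
    have h : Real.log ((2.89:ℝ) ^ 20) ≤ Real.log ((2:ℝ) ^ 31) :=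
      Real.log_le_log (by norm_num) (by norm_num)
    rw [Real.log_pow, Real.log_pow] at h
    push_cast at h
    linarith
  have h9 : Real.log L ≤ L / 8 - 1 + 3 * Real.log 2 := by
    have h : Real.log (L / 8) ≤ L / 8 - 1 := Real.log_le_sub_one_of_pos (by positivity)
    rw [Real.log_div (by positivity) (by norm_num), show (8:ℝ) = 2 ^ 3 by norm_num,
      Real.log_pow] at h
    push_cast at h
    linarith
  linarith

theorem mc_ratio_big (x y : ℕ) (hx : 443 ≤ x) (hy : x * nthPrime (2 * x) ≤ 2 * y) :
    nthPrime (2 * x) * y ≤ nthPrime (2 * y) * x := by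
  have hN := mc_five (2 * x) (by omega)
  have hII := mc_II (2 * x) (by omega)
  obtain ⟨N, hNe⟩ : ∃ N, N = nthPrime (2 * x) := ⟨_, rfl⟩
  rw [← hNe] at hy hN hII ⊢
  have hx' : (443:ℝ) ≤ x := by exact_mod_cast hx
  have hy' : (x:ℝ) * N ≤ 2 * y := by exact_mod_cast hy
  push_cast at hN hII
  have hN' : (4430:ℝ) ≤ N := by linarith
  have hyb : (981000:ℝ) ≤ y := by nlinarith
  have hyn : 1900000 ≤ 2 * y := by
    have : 981000 ≤ y := by exact_mod_cast hyb
    omega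
  by_contra hc
  push Not at hc
  have hM := mcS_up (2 * y) (by omega)
  have hM2 := mc_I2 (2 * y) hyn
  obtain ⟨M, hMe⟩ : ∃ M, M = nthPrime (2 * y) := ⟨_, rfl⟩
  have hM0 : (0:ℝ) < M := by rw [hMe]; exact_mod_cast (mc_prime _).pos
  rw [← hMe] at hM hc
  have hc' : (M:ℝ) * x < N * y := by exact_mod_cast hc
  push_cast at hM2
  have hl : 0 < Real.log 2 := by positivity
  have hx0 : (0:ℝ) < x := by linarith
  have hN0 : (0:ℝ) < N := by linarith
  have hy0 : (0:ℝ) < y := by linarith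
  -- size of log M
  have hlogM : 4 * Real.log M ≤ 0.001 * y := by
    have h1 : (M:ℝ) ≤ (y:ℝ) ^ 2 := by
      have : (N:ℝ) ≤ y := by nlinarith
      nlinarith
    have h2 := Real.log_le_log hM0 h1
    rw [Real.log_pow] at h2
    have h3 : Real.log ((y:ℝ) / 2 ^ 20) ≤ y / 2 ^ 20 - 1 :=
      Real.log_le_sub_one_of_pos (by positivity)
    rw [Real.log_div hy0.ne' (by norm_num), Real.log_pow] at h3
    have := Real.log_two_lt_d9
    push_cast at h2 h3
    linarith
  have hlog2y : Real.log x + Real.log N ≤ Real.log (2 * y) := by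
    rw [← Real.log_mul hx0.ne' hN0.ne']
    exact Real.log_le_log (by positivity) hy'
  have hMle : (M:ℝ) ≤ N / x * y := by
    rw [div_mul_eq_mul_div, le_div_iff₀ hx0]
    exact hc'.le
  have hNx : Real.log 2 * (N / x) ≤ 2 * Real.log N + Real.log (N + 1) / x := by
    have h : Real.log 2 * (N / x) = (N * Real.log 2) / x := by ring
    have h' : 2 * Real.log N + Real.log (N + 1) / x =
      (2 * x * Real.log N + Real.log (N + 1)) / x := by field_simp
    rw [h, h']
    gcongr
    linarith
  apply mc_real x N hx' hN' (by linarith)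
  have key : 2 * y * (Real.log x + Real.log N + 1.06) ≤
      (1.752 * (2 * Real.log N + Real.log (N + 1) / x) + 0.001) * y := by
    calc 2 * y * (Real.log x + Real.log N + 1.06) ≤ 2 * y * (Real.log (2 * y) + 1.06) := by gcongr
      _ ≤ 1.752 * Real.log 2 * M + 4 * Real.log M := by linarith
      _ ≤ 1.752 * Real.log 2 * (N / x * y) + 0.001 * y := by gcongr
      _ = (1.752 * (Real.log 2 * (N / x)) + 0.001) * y := by ring
      _ ≤ _ := by gcongr
  have key2 : 2 * (Real.log x + Real.log N + 1.06) ≤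
      1.752 * (2 * Real.log N + Real.log (N + 1) / x) + 0.001 := by
    apply le_of_mul_le_mul_right _ hy0
    linarith
  linarith

noncomputable def mcT : ℕ → ℕ
  | 0 => 2
  | (k+1) => nthPrime (2 * mcT k)

theorem mcT_pos (k : ℕ) : 2 ≤ mcT k := by
  cases k with
  | zero => exact le_rfl
  | succ k => exact (mc_prime _).two_le

theorem mcT_mono : Monotone mcT := by
  apply monotone_nat_of_le_succ
  intro k
  have h := Nat.add_two_le_nth_prime (2 * mcT k - 1)
  have h2 := mcT_pos k
  change mcT k ≤ Nat.nth Nat.Prime (2 * mcT k - 1)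
  omega

theorem mcT1 : mcT 1 = 7 := by
  change nthPrime (2 * 2) = 7
  exact mc_p7
theorem mcT2 : mcT 2 = 43 := by
  change nthPrime (2 * mcT 1) = 43
  rw [mcT1]; exact mc_p43
theorem mcT3 : mcT 3 = 443 := by
  change nthPrime (2 * mcT 2) = 443
  rw [mcT2]; exact mc_p443

theorem mc_ratio (c d : ℕ) (hd : 2 * c + 1 ≤ d) (hy : mcT c * mcT (c + 1) ≤ 2 * mcT d) :
    mcT (c + 1) * mcT d ≤ mcT (d + 1) * mcT c := by
  change mcT (c + 1) * mcT d ≤ nthPrime (2 * mcT d) * mcT c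
  have hm := mcT_mono hd
  obtain ⟨y, hye⟩ : ∃ y, y = mcT d := ⟨_, rfl⟩
  rw [← hye] at hy hm ⊢
  match c, hd, hy, hm with
  | 0, _, hy, hm =>
    simp only [mul_zero, zero_add, mcT1] at hm ⊢
    change 7 * y ≤ nthPrime (2 * y) * 2
    rcases Nat.lt_or_ge y 9 with h | h
    · have h1 := mc_mono (show 14 ≤ 2 * y by omega)
      rw [mc_p43] at h1
      omega
    · have := mc_three (2 * y) (by omega)
      omega
  | 1, _, hy, hm =>
    simp only [mul_one, Nat.reduceAdd, mcT1, mcT2, mcT3] at hm ⊢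
    have := mc_five (2 * y) (by omega)
    have : 5 * (2 * y) ≤ nthPrime (2 * y) := by exact_mod_cast this
    omega
  | 2, _, hy, hm =>
    simp only [Nat.reduceAdd, mcT2, mcT3] at hy ⊢
    have := mc_six (2 * y) (by omega)
    have : 6 * (2 * y) ≤ nthPrime (2 * y) := by exact_mod_cast this
    omega
  | (k + 3), _, hy, hm =>
    apply mc_ratio_big (mcT (k + 3)) y _ hy
    rw [← mcT3]
    exact mcT_mono (by omega)

theorem mcT_mul (n : ℕ) : ∀ a b : ℕ, a + b = n → mcT a * mcT b ≤ 2 * mcT (a + b) := by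
  induction n using Nat.strong_induction_on with
  | _ n ih =>
  have main : ∀ a b : ℕ, b ≤ a → a + b = n → mcT a * mcT b ≤ 2 * mcT (a + b) := by
    intro a b hba hab
    cases b with
    | zero =>
      simp only [add_zero]
      change mcT a * 2 ≤ _
      omega
    | succ c =>
      have h1 := ih (a + c) (by omega) a c rfl
      have h2 : mcT c * mcT (c + 1) ≤ 2 * mcT (a + c) := by
        refine (ih (c + (c + 1)) (by omega) c (c + 1) rfl).trans ?_
        exact Nat.mul_le_mul_left _ (mcT_mono (by omega))
      have h3 := mc_ratio c (a + c) (by omega) h2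
      have hp := mcT_pos (a + c)
      apply Nat.le_of_mul_le_mul_right _ (show 0 < mcT (a + c) by omega)
      calc mcT a * mcT (c + 1) * mcT (a + c) = mcT a * (mcT (c + 1) * mcT (a + c)) := by ring
        _ ≤ mcT a * (mcT (a + c + 1) * mcT c) := Nat.mul_le_mul_left _ h3
        _ = mcT (a + c + 1) * (mcT a * mcT c) := by ring
        _ ≤ mcT (a + c + 1) * (2 * mcT (a + c)) := Nat.mul_le_mul_left _ h1
        _ = 2 * mcT (a + (c + 1)) * mcT (a + c) := by
          rw [show a + (c + 1) = a + c + 1 by ring]; ring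
  intro a b hab
  rcases le_total b a with h | h
  · exact main a b h hab
  · have := main b a h (by omega)
    rw [mul_comm, add_comm a b]
    exact this

theorem mc_q (k : ℕ) : nthPrime (q (k + 1)) = mcT k := by
  induction k with
  | zero =>
    change nthPrime 1 = 2
    exact mc_p2
  | succ k ih =>
    change nthPrime (2 * nthPrime (q (k + 1))) = nthPrime (2 * mcT k)
    rw [ih]

theorem mc_leaves_mul (a b : ℕ) (ha : 1 ≤ a) (hb : 1 ≤ b) :
    matulaLeaves (nthPrime a * nthPrime b) = matulaLeaves a + matulaLeaves b := by
  have h1 := (mc_prime a).two_le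
  have h2 := (mc_prime b).two_le
  rw [matulaLeaves, if_neg (by nlinarith)]
  rw [List.attach_map_val (f := fun t => matulaLeaves (Nat.count Nat.Prime t + 1))]
  have hp := Nat.perm_primeFactorsList_mul (mc_prime a).ne_zero (mc_prime b).ne_zero
  rw [(hp.map _).sum_eq, Nat.primeFactorsList_prime (mc_prime a),
    Nat.primeFactorsList_prime (mc_prime b)]
  simp only [List.cons_append, List.nil_append, List.map_cons, List.map_nil, List.sum_cons,
    List.sum_nil, mc_count, add_zero]
  rw [Nat.sub_add_cancel ha, Nat.sub_add_cancel hb]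

theorem mc_bound (m : ℕ) (hB : MatulaBinary m) : 1 ≤ matulaLeaves m ∧ m ≤ q (matulaLeaves m) := by
  induction hB with
  | one =>
    have : matulaLeaves 1 = 1 := by rw [matulaLeaves]; simp
    rw [this]
    exact ⟨le_rfl, le_rfl⟩
  | node a b ha hb hA hB iha ihb =>
    rw [mc_leaves_mul a b ha hb]
    obtain ⟨ha1, ha2⟩ := iha
    obtain ⟨hb1, hb2⟩ := ihb
    refine ⟨by omega, ?_⟩
    obtain ⟨i, hi⟩ := Nat.exists_eq_add_of_le' ha1
    obtain ⟨j, hj⟩ := Nat.exists_eq_add_of_le' hb1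
    rw [hi] at ha2 ⊢
    rw [hj] at hb2 ⊢
    rw [show i + 1 + (j + 1) = (i + j) + 2 by ring]
    change _ ≤ 2 * nthPrime (q (i + j + 1))
    rw [mc_q]
    have h1 := mc_mono ha2
    have h2 := mc_mono hb2
    rw [mc_q] at h1 h2
    exact (Nat.mul_le_mul h1 h2).trans (mcT_mul (i + j) i j rfl)

/-- Every binary tree with `n` leaves has Matula number at most `q n`: the binary
caterpillar `F_n` also has the greatest Matula number among all binary trees with
`n` leaves. -/
theorem caterpillar_maximizes_matula_over_binary (n : ℕ) (hn : 1 ≤ n)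
    (m : ℕ) (hm : 1 ≤ m) (hB : MatulaBinary m) (hL : matulaLeaves m = n) :
    m ≤ q n := by
  subst hL
  exact (mc_bound m hB).2
end
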